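/- For every λ ∈ ℂ with Im λ > 0 and every ξ ∈ ℝ, the integral ∫₀^∞ b_λ(t) φ_ξ(t) Δ(t) dt converges absolutely and equals 1/(ξ² − λ²). (This is the statement that the spherical transform of b_λ is ξ ↦ 1/(ξ² − λ²).) -/

import Mathlib

open Complex MeasureTheory Set

noncomputable section

/-- Gauss hypergeometric function ₂F₁ as a power series sum. -/
def hyp (a b c x : ℂ) : ℂ :=
  ∑' n : ℕ, (ascPochhammer ℂ n).eval a * (ascPochhammer ℂ n).eval b /
    ((ascPochhammer ℂ n).eval c * (n.factorial : ℂ)) * x ^ n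

/-- ρ = (m₁ + 2 m₂)/2 -/
def rho (m₁ m₂ : ℕ) : ℝ := ((m₁ : ℝ) + 2 * m₂) / 2

/-- Δ(t) = (2 sinh t)^(m₁+m₂) (2 cosh t)^(m₂) -/
def Del (m₁ m₂ : ℕ) (t : ℝ) : ℝ :=
  (2 * Real.sinh t) ^ (m₁ + m₂) * (2 * Real.cosh t) ^ m₂

/-- The solution Φ_λ. -/
def Phi (m₁ m₂ : ℕ) (l : ℂ) (t : ℝ) : ℂ :=
  ((2 * Real.cosh t : ℝ) : ℂ) ^ (Complex.I * l - (rho m₁ m₂ : ℂ)) *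
    hyp (((rho m₁ m₂ : ℂ) - Complex.I * l) / 2) (((m₁ : ℂ) + 2) / 4 - Complex.I * l / 2)
      (1 - Complex.I * l) ((((Real.cosh t) ^ 2 : ℝ) : ℂ))⁻¹

/-- The function b_λ. -/
def bfun (m₁ m₂ : ℕ) (l : ℂ) (t : ℝ) : ℂ :=
  (2 : ℂ) ^ (-(rho m₁ m₂ : ℂ) - 1 - Complex.I * l) *
    (Complex.Gamma (((rho m₁ m₂ : ℂ) - Complex.I * l) / 2) *
      Complex.Gamma (((m₁ : ℂ) + 2) / 4 - Complex.I * l / 2) /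
      (Complex.Gamma (((m₁ : ℂ) + (m₂ : ℂ) + 1) / 2) * Complex.Gamma (1 - Complex.I * l))) *
    Phi m₁ m₂ l t

/-- The elementary spherical function φ_λ. -/
def sph (m₁ m₂ : ℕ) (l : ℂ) (t : ℝ) : ℂ :=
  ((Real.cosh t : ℝ) : ℂ) ^ (-((rho m₁ m₂ : ℂ) + Complex.I * l)) *
    hyp (((m₁ : ℂ) + 2) / 4 + Complex.I * l / 2) (((rho m₁ m₂ : ℂ) + Complex.I * l) / 2)
      (((m₁ : ℂ) + (m₂ : ℂ) + 1) / 2) (((Real.tanh t) ^ 2 : ℝ) : ℂ)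

theorem hasSum_ascPochhammer_div_factorial (a x : ℂ) (hx : ‖x‖ < 1) :
    HasSum (fun n : ℕ => (ascPochhammer ℂ n).eval a / (n.factorial : ℂ) * x ^ n)
      ((1 - x) ^ (-a)) := by
  have h := (one_div_one_sub_cpow_hasFPowerSeriesOnBall_zero a).hasSum (y := x)
    (by simpa [enorm_eq_nnnorm] using! hx)
  simp only [zero_add, one_div, ← cpow_neg] at h
  have e : (fun n : ℕ => (ascPochhammer ℂ n).eval a / (n.factorial : ℂ) * x ^ n) =
      fun n => (FormalMultilinearSeries.ofScalars ℂ
        (fun n : ℕ => Ring.choose (a + n - 1) n) n) fun _ => x := by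
    funext n
    have := Ring.factorial_nsmul_multichoose_eq_ascPochhammer a n
    rw [Polynomial.ascPochhammer_smeval_eq_eval, nsmul_eq_mul, Ring.multichoose_eq] at this
    rw [← this, mul_div_cancel_left₀ _ (by exact_mod_cast n.factorial_ne_zero)]
    simp [mul_comm]
  rw [e]
  exact h

theorem ascPochhammer_eval_ofReal (d : ℝ) (n : ℕ) :
    (ascPochhammer ℂ n).eval (d : ℂ) = (((ascPochhammer ℝ n).eval d : ℝ) : ℂ) := by
  rw [← ascPochhammer_map (algebraMap ℝ ℂ) n]
  exact Polynomial.eval_map_apply (algebraMap ℝ ℂ) d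

theorem hasSum_ascPochhammer_div_factorial_real (d x : ℝ) (hx : |x| < 1) :
    HasSum (fun n : ℕ => (ascPochhammer ℝ n).eval d / (n.factorial : ℝ) * x ^ n)
      ((1 - x) ^ (-d)) := by
  have h := hasSum_ascPochhammer_div_factorial (d : ℂ) (x : ℂ) (by simpa using hx)
  have h1 : (0 : ℝ) ≤ 1 - x := by linarith [(abs_lt.1 hx).2]
  rw [← Complex.hasSum_ofReal]
  convert h using 1
  · ext n
    rw [ascPochhammer_eval_ofReal]; push_cast; rfl
  · rw [Complex.ofReal_cpow h1]; push_cast; rfl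

theorem ascPochhammer_eval_eq_prod (a : ℂ) (n : ℕ) :
    (ascPochhammer ℂ n).eval a = ∏ j ∈ Finset.range n, (a + j) := by
  induction n with
  | zero => simp
  | succ n ih => rw [ascPochhammer_succ_eval, ih, Finset.prod_range_succ]

theorem ascPochhammer_eval_ne_zero {a : ℂ} (ha : 0 < a.re) (n : ℕ) :
    (ascPochhammer ℂ n).eval a ≠ 0 := by
  rw [Ne, ascPochhammer_eval_eq_zero_iff]
  rintro ⟨k, -, hk⟩
  have := congrArg re hk
  simp at this
  have : (0:ℝ) ≤ k := k.cast_nonneg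
  linarith

theorem Gamma_add_natCast {a : ℂ} (ha : 0 < a.re) (n : ℕ) :
    Gamma (a + n) = (ascPochhammer ℂ n).eval a * Gamma a := by
  rw [← Gamma_add_nat_div_Gamma_eq, div_mul_cancel₀ _ (Gamma_ne_zero_of_re_pos ha)]
  rintro k rfl
  simp at ha
  have : (0:ℝ) ≤ k := k.cast_nonneg
  linarith

theorem exists_norm_ascPochhammer_ratio_le {a b c d : ℂ} (ha : 0 < a.re) (hb : 0 < b.re)
    (hc : 0 < c.re) (hd : 0 < d.re) (h : a.re + b.re ≤ c.re + d.re) :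
    ∃ C : ℝ, 0 ≤ C ∧ ∀ n : ℕ,
      ‖(ascPochhammer ℂ n).eval a * (ascPochhammer ℂ n).eval b /
        ((ascPochhammer ℂ n).eval c * (ascPochhammer ℂ n).eval d)‖ ≤ C := by
  set r : ℕ → ℝ := fun n => ‖(ascPochhammer ℂ n).eval a * (ascPochhammer ℂ n).eval b /
        ((ascPochhammer ℂ n).eval c * (ascPochhammer ℂ n).eval d)‖ with hr
  have hlim := ((((GammaSeq_tendsto_Gamma c).mul (GammaSeq_tendsto_Gamma d)).div
    ((GammaSeq_tendsto_Gamma a).mul (GammaSeq_tendsto_Gamma b))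
    (mul_ne_zero (Gamma_ne_zero_of_re_pos ha) (Gamma_ne_zero_of_re_pos hb)))).norm
  obtain ⟨C, hC⟩ := hlim.bddAbove_range
  obtain ⟨D, hD⟩ : BddAbove (Set.range fun n => r (n + 1)) := by
    refine Filter.IsBoundedUnder.bddAbove_range ⟨C, ?_⟩
    rw [Filter.eventually_map]
    filter_upwards [Filter.eventually_ge_atTop 1] with n hn
    refine le_trans ?_ (hC (Set.mem_range_self n))
    have hn0 : (0 : ℝ) < n := by exact_mod_cast hn
    have hnc : (n : ℂ) ≠ 0 := by exact_mod_cast hn0.ne'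
    have hf : (n.factorial : ℂ) ≠ 0 := by exact_mod_cast n.factorial_ne_zero
    have key : ∀ z : ℂ, GammaSeq z n =
        (n : ℂ) ^ z * n.factorial / (ascPochhammer ℂ (n + 1)).eval z := fun z => by
      rw [GammaSeq, ascPochhammer_eval_eq_prod]
    have hpow : ∀ z : ℂ, (n : ℂ) ^ z ≠ 0 := fun z => by simp [cpow_eq_zero_iff, hnc]
    have e : GammaSeq c n * GammaSeq d n / (GammaSeq a n * GammaSeq b n) =
        (n : ℂ) ^ (c + d - (a + b)) *
        ((ascPochhammer ℂ (n + 1)).eval a * (ascPochhammer ℂ (n + 1)).eval b /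
        ((ascPochhammer ℂ (n + 1)).eval c * (ascPochhammer ℂ (n + 1)).eval d)) := by
      simp only [key]
      rw [cpow_sub _ _ hnc, cpow_add _ _ hnc, cpow_add _ _ hnc]
      have h1 := hpow a
      have h2 := hpow b
      have h3 := ascPochhammer_eval_ne_zero ha (n + 1)
      have h4 := ascPochhammer_eval_ne_zero hb (n + 1)
      have h5 := ascPochhammer_eval_ne_zero hc (n + 1)
      have h6 := ascPochhammer_eval_ne_zero hd (n + 1)
      field_simp
    simp only [Pi.div_apply, e, hr]
    rw [norm_mul]
    rw [show ((n : ℂ)) = ((n : ℝ) : ℂ) by simp, norm_cpow_eq_rpow_re_of_pos hn0]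
    refine le_mul_of_one_le_left (norm_nonneg _) ?_
    refine Real.one_le_rpow (by exact_mod_cast hn) ?_
    simp; linarith
  refine ⟨max 1 D, by positivity, fun n => ?_⟩
  cases n with
  | zero => simp
  | succ n => exact (hD (Set.mem_range_self n)).trans (le_max_right _ _)

theorem exists_norm_hyp_coeff_le {a b c : ℂ} {d : ℝ} (ha : 0 < a.re) (hb : 0 < b.re)
    (hc : 0 < c.re) (hd : 0 < d) (h : a.re + b.re ≤ c.re + d) :
    ∃ C : ℝ, 0 ≤ C ∧ ∀ n : ℕ,
      ‖(ascPochhammer ℂ n).eval a * (ascPochhammer ℂ n).eval b /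
        ((ascPochhammer ℂ n).eval c * (n.factorial : ℂ))‖ ≤
        C * ((ascPochhammer ℝ n).eval d / n.factorial) := by
  obtain ⟨C, hC0, hC⟩ := exists_norm_ascPochhammer_ratio_le (d := (d : ℂ)) ha hb hc
    (by simpa using hd) (by simpa using h)
  refine ⟨C, hC0, fun n => ?_⟩
  have hp : 0 < (ascPochhammer ℝ n).eval d := ascPochhammer_pos n d hd
  have hd' : (ascPochhammer ℂ n).eval (d : ℂ) ≠ 0 :=
    ascPochhammer_eval_ne_zero (by simpa using hd) n
  have e : (ascPochhammer ℂ n).eval a * (ascPochhammer ℂ n).eval b /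
        ((ascPochhammer ℂ n).eval c * (n.factorial : ℂ)) =
      (ascPochhammer ℂ n).eval a * (ascPochhammer ℂ n).eval b /
        ((ascPochhammer ℂ n).eval c * (ascPochhammer ℂ n).eval (d : ℂ)) *
        (((ascPochhammer ℝ n).eval d / n.factorial : ℝ) : ℂ) := by
    push_cast
    rw [← ascPochhammer_eval_ofReal]
    have hf : (n.factorial : ℂ) ≠ 0 := by exact_mod_cast n.factorial_ne_zero
    have hc' := ascPochhammer_eval_ne_zero hc n
    field_simp
  have hw : 0 ≤ (ascPochhammer ℝ n).eval d / n.factorial := by positivity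
  rw [e, norm_mul, Complex.norm_real, Real.norm_of_nonneg hw]
  exact mul_le_mul_of_nonneg_right (hC n) hw

theorem summable_and_norm_tsum_le_of_le {A : ℕ → ℂ} {C d x : ℝ}
    (hA : ∀ n, ‖A n‖ ≤ C * ((ascPochhammer ℝ n).eval d / n.factorial))
    (hx : x ∈ Ioo (0 : ℝ) 1) :
    Summable (fun n => A n * (x : ℂ) ^ n) ∧
      ‖∑' n, A n * (x : ℂ) ^ n‖ ≤ C * (1 - x) ^ (-d) := by
  have hs := (hasSum_ascPochhammer_div_factorial_real d x
    (abs_lt.2 ⟨by linarith [hx.1], hx.2⟩)).mul_left C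
  have hb : ∀ n, ‖A n * (x : ℂ) ^ n‖ ≤
      C * ((ascPochhammer ℝ n).eval d / n.factorial * x ^ n) := fun n => by
    rw [norm_mul, norm_pow, Complex.norm_real, Real.norm_of_nonneg hx.1.le, ← mul_assoc]
    exact mul_le_mul_of_nonneg_right (hA n) (pow_nonneg hx.1.le n)
  exact ⟨Summable.of_norm_bounded hs.summable hb, tsum_of_norm_bounded hs hb⟩

theorem aestronglyMeasurable_tsum_mul_pow (A : ℕ → ℂ)
    (hA : ∀ x ∈ Ioo (0 : ℝ) 1, Summable (fun n => A n * (x : ℂ) ^ n)) :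
    AEStronglyMeasurable (fun x : ℝ => ∑' n, A n * (x : ℂ) ^ n)
      (volume.restrict (Ioo (0 : ℝ) 1)) := by
  refine aestronglyMeasurable_of_tendsto_ae Filter.atTop
    (f := fun N (x : ℝ) => ∑ n ∈ Finset.range N, A n * (x : ℂ) ^ n) (fun N => ?_) ?_
  · exact (by fun_prop : Continuous fun (x : ℝ) =>
      ∑ n ∈ Finset.range N, A n * (x : ℂ) ^ n).aestronglyMeasurable
  · filter_upwards [ae_restrict_mem measurableSet_Ioo] with x hx
    exact (hA x hx).hasSum.tendsto_sum_nat

theorem hasSum_integral_tsum_mul {A : ℕ → ℂ} {C d : ℝ} {g : ℝ → ℂ}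
    (hA : ∀ n, ‖A n‖ ≤ C * ((ascPochhammer ℝ n).eval d / n.factorial))
    (hgm : AEStronglyMeasurable g (volume.restrict (Ioo (0 : ℝ) 1)))
    (hg : IntegrableOn (fun x : ℝ => (1 - x) ^ (-d) * ‖g x‖) (Ioo (0 : ℝ) 1)) :
    IntegrableOn (fun x : ℝ => (∑' n, A n * (x : ℂ) ^ n) * g x) (Ioo (0 : ℝ) 1) ∧
    HasSum (fun n => A n * ∫ x in Ioo (0 : ℝ) 1, (x : ℂ) ^ n * g x)
      (∫ x in Ioo (0 : ℝ) 1, (∑' n, A n * (x : ℂ) ^ n) * g x) := by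
  have hs : ∀ x ∈ Ioo (0 : ℝ) 1,
      HasSum (fun n : ℕ => C * ((ascPochhammer ℝ n).eval d / n.factorial) * x ^ n * ‖g x‖)
        (C * ((1 - x) ^ (-d) * ‖g x‖)) := fun x hx => by
    have := ((hasSum_ascPochhammer_div_factorial_real d x
      (abs_lt.2 ⟨by linarith [hx.1], hx.2⟩)).mul_left C).mul_right ‖g x‖
    simpa only [mul_assoc] using this
  constructor
  · refine Integrable.mono' (hg.const_mul C) ((aestronglyMeasurable_tsum_mul_pow A fun x hx =>
      (summable_and_norm_tsum_le_of_le hA hx).1).mul hgm) ?_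
    filter_upwards [ae_restrict_mem measurableSet_Ioo] with x hx
    rw [norm_mul, ← mul_assoc]
    exact mul_le_mul_of_nonneg_right (summable_and_norm_tsum_le_of_le hA hx).2 (norm_nonneg _)
  · have := hasSum_integral_of_dominated_convergence
      (μ := volume.restrict (Ioo (0 : ℝ) 1))
      (F := fun n (x : ℝ) => A n * ((x : ℂ) ^ n * g x))
      (f := fun x : ℝ => (∑' n, A n * (x : ℂ) ^ n) * g x)
      (fun n x => C * ((ascPochhammer ℝ n).eval d / n.factorial) * x ^ n * ‖g x‖)
      (fun n => ?_) (fun n => ?_) ?_ ?_ ?_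
    · simpa only [integral_const_mul] using this
    · exact ((by fun_prop : Continuous fun (x : ℝ) => (x : ℂ) ^ n).aestronglyMeasurable.mul
        hgm).const_mul (A n)
    · filter_upwards [ae_restrict_mem measurableSet_Ioo] with x hx
      rw [norm_mul, norm_mul, norm_pow, Complex.norm_real, Real.norm_of_nonneg hx.1.le,
        mul_assoc (C * _)]
      exact mul_le_mul_of_nonneg_right (hA n) (mul_nonneg (pow_nonneg hx.1.le n) (norm_nonneg _))
    · filter_upwards [ae_restrict_mem measurableSet_Ioo] with x hx
      exact (hs x hx).summable
    · refine (hg.const_mul C).congr ?_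
      filter_upwards [ae_restrict_mem measurableSet_Ioo] with x hx
      exact (hs x hx).tsum_eq.symm
    · filter_upwards [ae_restrict_mem measurableSet_Ioo] with x hx
      have := (summable_and_norm_tsum_le_of_le hA hx).1.hasSum.mul_right (g x)
      simpa only [mul_assoc] using this

theorem integrableOn_cpow_mul_cpow {u v : ℂ} (hu : 0 < u.re) (hv : 0 < v.re) :
    IntegrableOn (fun x : ℝ => (x : ℂ) ^ (u - 1) * (1 - (x : ℂ)) ^ (v - 1)) (Ioo (0 : ℝ) 1) := by
  have h := betaIntegral_convergent hu hv
  rwa [intervalIntegrable_iff_integrableOn_Ioo_of_le zero_le_one] at h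

theorem integral_cpow_mul_cpow {u v : ℂ} (hu : 0 < u.re) (hv : 0 < v.re) :
    ∫ x in Ioo (0 : ℝ) 1, (x : ℂ) ^ (u - 1) * (1 - (x : ℂ)) ^ (v - 1) =
      Gamma u * Gamma v / Gamma (u + v) := by
  rw [← betaIntegral_eq_Gamma_mul_div u v hu hv, betaIntegral,
    intervalIntegral.integral_of_le zero_le_one, integral_Ioc_eq_integral_Ioo]

theorem integral_pow_mul_cpow_mul_cpow {u v : ℂ} (hu : 0 < u.re) (hv : 0 < v.re) (n : ℕ) :
    ∫ x in Ioo (0 : ℝ) 1, (x : ℂ) ^ n * ((x : ℂ) ^ (u - 1) * (1 - (x : ℂ)) ^ (v - 1)) =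
      (ascPochhammer ℂ n).eval u / (ascPochhammer ℂ n).eval (u + v) *
        (Gamma u * Gamma v / Gamma (u + v)) := by
  have hun : 0 < (u + n).re := by simpa using add_pos_of_pos_of_nonneg hu n.cast_nonneg
  have huv : 0 < (u + v).re := by simpa using add_pos hu hv
  have h := integral_cpow_mul_cpow hun hv
  rw [show u + n + v = u + v + n by ring, Gamma_add_natCast hu, Gamma_add_natCast huv] at h
  have e : ∀ x ∈ Ioo (0 : ℝ) 1, (x : ℂ) ^ n * ((x : ℂ) ^ (u - 1) * (1 - (x : ℂ)) ^ (v - 1)) =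
      (x : ℂ) ^ (u + n - 1) * (1 - (x : ℂ)) ^ (v - 1) := fun x hx => by
    have hx0 : (x : ℂ) ≠ 0 := by exact_mod_cast hx.1.ne'
    rw [show u + n - 1 = u - 1 + n by ring, cpow_add _ _ hx0, cpow_natCast]
    ring
  rw [setIntegral_congr_fun measurableSet_Ioo e, h]
  have := ascPochhammer_eval_ne_zero huv n
  have := Gamma_ne_zero_of_re_pos huv
  field_simp

theorem norm_cpow_mul_cpow {u v : ℂ} {x : ℝ} (hx : x ∈ Ioo (0 : ℝ) 1) :
    ‖(x : ℂ) ^ u * (1 - (x : ℂ)) ^ v‖ = x ^ u.re * (1 - x) ^ v.re := by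
  rw [norm_mul, norm_cpow_eq_rpow_re_of_pos hx.1, ← Complex.ofReal_one, ← Complex.ofReal_sub,
    norm_cpow_eq_rpow_re_of_pos (sub_pos.2 hx.2)]

theorem integrableOn_rpow_mul_rpow {u v : ℝ} (hu : 0 < u) (hv : 0 < v) :
    IntegrableOn (fun x : ℝ => x ^ (u - 1) * (1 - x) ^ (v - 1)) (Ioo (0 : ℝ) 1) := by
  refine (integrableOn_cpow_mul_cpow (u := u) (v := v) (by simpa) (by simpa)).norm.congr ?_
  filter_upwards [ae_restrict_mem measurableSet_Ioo] with x hx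
  rw [norm_cpow_mul_cpow hx]; simp

theorem aestronglyMeasurable_cpow_mul_cpow (u v : ℂ) :
    AEStronglyMeasurable (fun x : ℝ => (x : ℂ) ^ u * (1 - (x : ℂ)) ^ v)
      (volume.restrict (Ioo (0 : ℝ) 1)) := by
  refine Measurable.aestronglyMeasurable ?_
  fun_prop

theorem setIntegral_Ioo_comp_one_sub (f : ℝ → ℂ) :
    ∫ x in Ioo (0 : ℝ) 1, f (1 - x) = ∫ x in Ioo (0 : ℝ) 1, f x := by
  rw [← integral_Ioc_eq_integral_Ioo, ← integral_Ioc_eq_integral_Ioo,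
    ← intervalIntegral.integral_of_le zero_le_one, ← intervalIntegral.integral_of_le zero_le_one,
    intervalIntegral.integral_comp_sub_left]
  simp

theorem HasSum.of_eq_of_eq {f g : ℕ → ℂ} {u v : ℂ} (h : HasSum f u) (hf : ∀ n, g n = f n)
    (hu : v = u) : HasSum g v := by
  rw [hu, funext hf]; exact h

theorem hasSum_hyp_one {a b c : ℂ} (ha : 0 < a.re) (hb : 0 < b.re) (hc : 0 < c.re)
    (h : 0 < (c - a - b).re) :
    HasSum (fun n : ℕ => (ascPochhammer ℂ n).eval a * (ascPochhammer ℂ n).eval b /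
      ((ascPochhammer ℂ n).eval c * (n.factorial : ℂ)))
      (Gamma c * Gamma (c - a - b) / (Gamma (c - a) * Gamma (c - b))) := by
  have hcb : 0 < (c - b).re := by simp at h ⊢; linarith
  have hca : 0 < (c - a).re := by simp at h ⊢; linarith
  obtain ⟨C, -, hC⟩ := exists_norm_hyp_coeff_le (a := a) (b := 1) (c := 1) (d := a.re)
    ha (by simp) (by simp) ha (by simp [add_comm])
  have hA : ∀ n : ℕ, ‖(ascPochhammer ℂ n).eval a / (n.factorial : ℂ)‖ ≤
      C * ((ascPochhammer ℝ n).eval a.re / n.factorial) := fun n => by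
    convert hC n using 2
    rw [mul_comm _ ((ascPochhammer ℂ n).eval 1),
      mul_div_mul_left _ _ (ascPochhammer_eval_ne_zero (by simp) n)]
  have hg : IntegrableOn (fun x : ℝ => (1 - x) ^ (-a.re) *
      ‖(x : ℂ) ^ (b - 1) * (1 - (x : ℂ)) ^ (c - b - 1)‖) (Ioo (0 : ℝ) 1) := by
    refine (integrableOn_rpow_mul_rpow hb h).congr ?_
    filter_upwards [ae_restrict_mem measurableSet_Ioo] with x hx
    rw [norm_cpow_mul_cpow hx, mul_left_comm, ← Real.rpow_add (sub_pos.2 hx.2)]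
    simp
    left; congr 1; ring
  have hsum := (hasSum_integral_tsum_mul hA (aestronglyMeasurable_cpow_mul_cpow _ _) hg).2
  have hint : ∫ x in Ioo (0 : ℝ) 1, (∑' n : ℕ, (ascPochhammer ℂ n).eval a / (n.factorial : ℂ) *
        (x : ℂ) ^ n) * ((x : ℂ) ^ (b - 1) * (1 - (x : ℂ)) ^ (c - b - 1)) =
      Gamma b * Gamma (c - a - b) / Gamma (c - a) := by
    have hB := integral_cpow_mul_cpow hb h
    rw [show b + (c - a - b) = c - a by ring] at hB
    rw [← hB]
    refine setIntegral_congr_fun measurableSet_Ioo fun x hx => ?_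
    have h1 : (1 - (x : ℂ)) ≠ 0 := by
      rw [← Complex.ofReal_one, ← Complex.ofReal_sub]
      exact_mod_cast (sub_pos.2 hx.2).ne'
    rw [(hasSum_ascPochhammer_div_factorial a x (by simp [abs_of_pos hx.1, hx.2])).tsum_eq,
      mul_left_comm, ← cpow_add _ _ h1]
    congr 2; ring
  rw [hint] at hsum
  have hG := Gamma_ne_zero_of_re_pos hb
  have hG' := Gamma_ne_zero_of_re_pos hcb
  have hG'' := Gamma_ne_zero_of_re_pos hc
  have hG3 := Gamma_ne_zero_of_re_pos hca
  refine (hsum.mul_right (Gamma c / (Gamma b * Gamma (c - b)))).of_eq_of_eq (fun n => ?_) ?_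
  · rw [integral_pow_mul_cpow_mul_cpow hb hcb, show b + (c - b) = c by ring]
    have := ascPochhammer_eval_ne_zero hc n
    have hf : (n.factorial : ℂ) ≠ 0 := by exact_mod_cast n.factorial_ne_zero
    field_simp
  · field_simp

theorem integral_cpow_mul_hyp_one_sub {a b c s : ℂ} (ha : 0 < a.re) (hb : 0 < b.re)
    (hc : 0 < c.re) (hs : 0 < s.re) (h : 0 < (s + c - a - b).re) :
    ∫ x in Ioo (0 : ℝ) 1, (x : ℂ) ^ (s - 1) * (1 - (x : ℂ)) ^ (c - 1) * hyp a b c (1 - x) =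
      Gamma s * Gamma c * Gamma (s + c - a - b) / (Gamma (s + c - a) * Gamma (s + c - b)) := by
  set d : ℝ := max (a.re + b.re - c.re) (s.re / 2) with hd
  have hd0 : 0 < d := lt_max_of_lt_right (by linarith)
  have hds : 0 < s.re - d := by
    simp at h
    rw [hd, sub_pos, max_lt_iff]; constructor <;> linarith
  have hsc : 0 < (s + c).re := by simpa using add_pos hs hc
  obtain ⟨C, -, hC⟩ := exists_norm_hyp_coeff_le (d := d) ha hb hc hd0
    (by linarith [le_max_left (a.re + b.re - c.re) (s.re / 2)])
  have hg : IntegrableOn (fun x : ℝ => (1 - x) ^ (-d) *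
      ‖(x : ℂ) ^ (c - 1) * (1 - (x : ℂ)) ^ (s - 1)‖) (Ioo (0 : ℝ) 1) := by
    refine (integrableOn_rpow_mul_rpow hc hds).congr ?_
    filter_upwards [ae_restrict_mem measurableSet_Ioo] with x hx
    rw [norm_cpow_mul_cpow hx, mul_left_comm, ← Real.rpow_add (sub_pos.2 hx.2)]
    simp
    left; congr 1; ring
  have hsum := (hasSum_integral_tsum_mul hC (aestronglyMeasurable_cpow_mul_cpow _ _) hg).2
  have hflip := setIntegral_Ioo_comp_one_sub (fun x : ℝ =>
    (x : ℂ) ^ (s - 1) * (1 - (x : ℂ)) ^ (c - 1) * hyp a b c (1 - x))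
  rw [← hflip]
  have hint : ∫ x in Ioo (0 : ℝ) 1, (fun x : ℝ =>
      (x : ℂ) ^ (s - 1) * (1 - (x : ℂ)) ^ (c - 1) * hyp a b c (1 - x)) (1 - x) =
      ∫ x in Ioo (0 : ℝ) 1, (∑' n : ℕ, (ascPochhammer ℂ n).eval a * (ascPochhammer ℂ n).eval b /
        ((ascPochhammer ℂ n).eval c * (n.factorial : ℂ)) * (x : ℂ) ^ n) *
        ((x : ℂ) ^ (c - 1) * (1 - (x : ℂ)) ^ (s - 1)) := by
    congr 1; funext x
    simp only [Complex.ofReal_sub, Complex.ofReal_one, sub_sub_cancel, hyp]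
    ring
  rw [hint]
  refine hsum.unique ?_
  have hG := (hasSum_hyp_one ha hb hsc h).mul_left (Gamma c * Gamma s / Gamma (s + c))
  refine hG.of_eq_of_eq (fun n => ?_) ?_
  · rw [integral_pow_mul_cpow_mul_cpow hc hs, add_comm c s]
    have := ascPochhammer_eval_ne_zero hc n
    field_simp
  · have := Gamma_ne_zero_of_re_pos hsc
    field_simp

theorem integrableOn_and_integral_hyp_mul_hyp {s t a b c : ℂ} (ha : 0 < a.re) (hb : 0 < b.re)
    (hc : 0 < c.re) (hs : 0 < s.re) (ht : 0 < t.re) (hab : a + b + t = s + c)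
    (hsa : 0 < (s + c - a).re) (hsb : 0 < (s + c - b).re) :
    IntegrableOn (fun x : ℝ => hyp (s + c - a) (s + c - b) (1 + s + t) x *
      ((x : ℂ) ^ (s - 1) * (1 - (x : ℂ)) ^ (c - 1) * hyp a b c (1 - x))) (Ioo (0 : ℝ) 1) ∧
    ∫ x in Ioo (0 : ℝ) 1, hyp (s + c - a) (s + c - b) (1 + s + t) x *
      ((x : ℂ) ^ (s - 1) * (1 - (x : ℂ)) ^ (c - 1) * hyp a b c (1 - x)) =
      Gamma c * Gamma (1 + s + t) / (Gamma (s + c - a) * Gamma (s + c - b)) / (s * t) := by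
  have hre := congrArg re hab
  simp only [add_re] at hre
  set d : ℝ := max (a.re + b.re - c.re) (s.re / 2) with hd
  have hd0 : 0 < d := lt_max_of_lt_right (by linarith)
  have hds : 0 < s.re - d := by
    rw [hd, sub_pos, max_lt_iff]; constructor <;> linarith
  obtain ⟨C, hC0, hC⟩ := exists_norm_hyp_coeff_le (d := d) ha hb hc hd0
    (by linarith [le_max_left (a.re + b.re - c.re) (s.re / 2)])
  set e : ℝ := max (c.re - 1) (c.re / 2) with he
  have he0 : 0 < e := lt_max_of_lt_right (by linarith)
  have hec : 0 < c.re - e := by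
    rw [he, sub_pos, max_lt_iff]; constructor <;> linarith
  have hst : 0 < (1 + s + t).re := by simp; linarith
  obtain ⟨D, hD0, hD⟩ := exists_norm_hyp_coeff_le (d := e) hsa hsb hst he0
    (by simp; linarith [le_max_left (c.re - 1) (c.re / 2)])
  have hgm : AEStronglyMeasurable (fun x : ℝ =>
      (x : ℂ) ^ (s - 1) * (1 - (x : ℂ)) ^ (c - 1) * hyp a b c (1 - x))
      (volume.restrict (Ioo (0 : ℝ) 1)) := by
    refine (aestronglyMeasurable_cpow_mul_cpow _ _).mul ?_
    refine aestronglyMeasurable_of_tendsto_ae Filter.atTop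
      (f := fun N (x : ℝ) => ∑ n ∈ Finset.range N, (ascPochhammer ℂ n).eval a *
        (ascPochhammer ℂ n).eval b / ((ascPochhammer ℂ n).eval c * (n.factorial : ℂ)) *
        (1 - (x : ℂ)) ^ n) (fun N => ?_) ?_
    · exact (by fun_prop : Continuous fun (x : ℝ) => ∑ n ∈ Finset.range N,
        (ascPochhammer ℂ n).eval a * (ascPochhammer ℂ n).eval b /
          ((ascPochhammer ℂ n).eval c * (n.factorial : ℂ)) *
          (1 - (x : ℂ)) ^ n).aestronglyMeasurable
    · filter_upwards [ae_restrict_mem measurableSet_Ioo] with x hx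
      have := (summable_and_norm_tsum_le_of_le hC (x := 1 - x)
        ⟨by linarith [hx.2], by linarith [hx.1]⟩).1.hasSum.tendsto_sum_nat
      simpa only [Complex.ofReal_sub, Complex.ofReal_one, hyp] using this
  have hg : IntegrableOn (fun x : ℝ => (1 - x) ^ (-e) *
      ‖(x : ℂ) ^ (s - 1) * (1 - (x : ℂ)) ^ (c - 1) * hyp a b c (1 - x)‖) (Ioo (0 : ℝ) 1) := by
    refine ((integrableOn_rpow_mul_rpow hds hec).const_mul C).mono' ?_ ?_
    · exact (by fun_prop : Measurable fun x : ℝ => (1 - x) ^ (-e)).aestronglyMeasurable.mul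
        hgm.norm
    filter_upwards [ae_restrict_mem measurableSet_Ioo] with x hx
    have h1 := (summable_and_norm_tsum_le_of_le hC (x := 1 - x)
      ⟨by linarith [hx.2], by linarith [hx.1]⟩).2
    rw [sub_sub_cancel] at h1
    have h1x : 0 < 1 - x := sub_pos.2 hx.2
    have h2 := norm_cpow_mul_cpow (u := s - 1) (v := c - 1) hx
    rw [Real.norm_of_nonneg (mul_nonneg (Real.rpow_nonneg h1x.le _) (norm_nonneg _)), norm_mul, h2]
    calc (1 - x) ^ (-e) * (x ^ (s - 1).re * (1 - x) ^ (c - 1).re * ‖hyp a b c (1 - x)‖)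
        ≤ (1 - x) ^ (-e) * (x ^ (s - 1).re * (1 - x) ^ (c - 1).re * (C * x ^ (-d))) := by
          refine mul_le_mul_of_nonneg_left (mul_le_mul_of_nonneg_left ?_ ?_)
            (Real.rpow_nonneg h1x.le _)
          · simpa [hyp] using h1
          · exact mul_nonneg (Real.rpow_nonneg hx.1.le _) (Real.rpow_nonneg h1x.le _)
      _ = C * ((x ^ (s - 1).re * x ^ (-d)) * ((1 - x) ^ (c - 1).re * (1 - x) ^ (-e))) := by ring
      _ = C * (x ^ (s.re - d - 1) * (1 - x) ^ (c.re - e - 1)) := by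
          rw [← Real.rpow_add hx.1, ← Real.rpow_add h1x]
          congr 3 <;> simp <;> ring
  obtain ⟨hI, hsum⟩ := hasSum_integral_tsum_mul hD hgm hg
  refine ⟨hI, hsum.unique ?_⟩
  have hG := (hasSum_hyp_one hs ht hst
    (by rw [show 1 + s + t - s - t = 1 by ring]; simp)).mul_left
    (Gamma s * Gamma c * Gamma t / (Gamma (s + c - a) * Gamma (s + c - b)))
  have hn0 : ∀ {z : ℂ}, 0 < z.re → z ≠ 0 := by rintro z hz rfl; simp at hz
  refine hG.of_eq_of_eq (fun n => ?_) ?_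
  · have hsn : 0 < (s + n).re := by simpa using add_pos_of_pos_of_nonneg hs n.cast_nonneg
    have htn : 0 < (t + n).re := by simpa using add_pos_of_pos_of_nonneg ht n.cast_nonneg
    have e1 : s + n + c - a - b = t + n := by linear_combination -hab
    have h1 := integral_cpow_mul_hyp_one_sub ha hb hc hsn (by rw [e1]; exact htn)
    have e2 : ∀ x ∈ Ioo (0 : ℝ) 1, (x : ℂ) ^ n *
        ((x : ℂ) ^ (s - 1) * (1 - (x : ℂ)) ^ (c - 1) * hyp a b c (1 - x)) =
        (x : ℂ) ^ (s + n - 1) * (1 - (x : ℂ)) ^ (c - 1) * hyp a b c (1 - x) := fun x hx => by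
      have hx0 : (x : ℂ) ≠ 0 := by exact_mod_cast hx.1.ne'
      rw [show s + n - 1 = s - 1 + n by ring, cpow_add _ _ hx0, cpow_natCast]
      ring
    rw [setIntegral_congr_fun measurableSet_Ioo e2, h1, e1,
      show s + n + c - a = s + c - a + n by ring, show s + n + c - b = s + c - b + n by ring,
      Gamma_add_natCast hs, Gamma_add_natCast ht, Gamma_add_natCast hsa, Gamma_add_natCast hsb]
    have := ascPochhammer_eval_ne_zero hst n
    have := ascPochhammer_eval_ne_zero hsa n
    have := ascPochhammer_eval_ne_zero hsb n
    have := Gamma_ne_zero_of_re_pos hsa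
    have := Gamma_ne_zero_of_re_pos hsb
    have hf : (n.factorial : ℂ) ≠ 0 := by exact_mod_cast n.factorial_ne_zero
    field_simp
  · rw [show 1 + s + t - s - t = 1 by ring, show 1 + s + t - s = t + 1 by ring,
      show 1 + s + t - t = s + 1 by ring, Gamma_one, Gamma_add_one _ (hn0 hs), Gamma_add_one _ (hn0 ht)]
    have := Gamma_ne_zero_of_re_pos hs
    have := Gamma_ne_zero_of_re_pos ht
    have := Gamma_ne_zero_of_re_pos hsa
    have := Gamma_ne_zero_of_re_pos hsb
    have := hn0 hs
    have := hn0 ht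
    field_simp

theorem hasDerivAt_inv_cosh_sq (t : ℝ) :
    HasDerivAt (fun t : ℝ => (Real.cosh t ^ 2)⁻¹) (-(2 * Real.sinh t / Real.cosh t ^ 3)) t := by
  have hC := (Real.cosh_pos t).ne'
  refine (((Real.hasDerivAt_cosh t).fun_pow 2).fun_inv (pow_ne_zero 2 hC)).congr_deriv ?_
  push_cast
  field_simp

theorem injOn_inv_cosh_sq : InjOn (fun t : ℝ => (Real.cosh t ^ 2)⁻¹) (Ioi 0) := by
  intro x hx y hy h
  have h2 := inv_injective h
  have h3 := (pow_left_inj₀ (Real.cosh_pos x).le (Real.cosh_pos y).le two_ne_zero).1 h2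
  exact Real.cosh_strictMonoOn.injOn (mem_Ici.2 (le_of_lt hx)) (mem_Ici.2 (le_of_lt hy)) h3

theorem image_inv_cosh_sq : (fun t : ℝ => (Real.cosh t ^ 2)⁻¹) '' Ioi 0 = Ioo 0 1 := by
  ext x
  constructor
  · rintro ⟨t, ht, rfl⟩
    have h1 : 1 < Real.cosh t := Real.one_lt_cosh.2 (ne_of_gt ht)
    exact ⟨by positivity, inv_lt_one_of_one_lt₀ (one_lt_pow₀ h1 two_ne_zero)⟩
  · rintro ⟨h0, h1⟩
    have h2 : 1 < √(x⁻¹) := by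
      rw [Real.lt_sqrt zero_le_one, one_pow]
      exact (one_lt_inv₀ h0).2 h1
    refine ⟨Real.arcosh √(x⁻¹), Real.arcosh_pos h2, ?_⟩
    simp only
    rw [Real.cosh_arcosh h2.le, Real.sq_sqrt (inv_nonneg.2 h0.le), inv_inv]

theorem cpow_mul_cpow_mul_pow_mul_pow {C S : ℝ} (hC : 0 < C) (hS : 0 < S) (m₁ m₂ : ℕ)
    (u v s c : ℂ) (hc : 2 * c = m₁ + m₂ + 1) (hs : u + v + m₂ = 1 - 2 * s - 2 * c) :
    ((2 * C : ℝ) : ℂ) ^ u * (C : ℂ) ^ v * (((2 * S) ^ (m₁ + m₂) * (2 * C) ^ m₂ : ℝ) : ℂ) =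
      2 ^ (u + m₁ + m₂ + m₂ - 1) * (((2 * S / C ^ 3 : ℝ) : ℂ) *
        ((((C ^ 2)⁻¹ : ℝ) : ℂ) ^ (s - 1) * ((S ^ 2 / C ^ 2 : ℝ) : ℂ) ^ (c - 1))) := by
  have key : ∀ (p : ℝ) (z : ℂ), ((Real.exp p : ℝ) : ℂ) ^ z = Complex.exp (p * z) := fun p z => by
    rw [cpow_def_of_ne_zero (by exact_mod_cast (Real.exp_pos p).ne'), ← ofReal_log
      (Real.exp_pos p).le, Real.log_exp]
  obtain ⟨p, rfl⟩ : ∃ p, Real.exp p = C := ⟨_, Real.exp_log hC⟩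
  obtain ⟨q, rfl⟩ : ∃ q, Real.exp q = S := ⟨_, Real.exp_log hS⟩
  obtain ⟨r, hr⟩ : ∃ r, Real.exp r = 2 := ⟨_, Real.exp_log two_pos⟩
  rw [show (2 : ℂ) = ((2 : ℝ) : ℂ) by norm_num, ← hr, ← Real.exp_nat_mul, ← Real.exp_nat_mul,
    ← Real.exp_nat_mul, ← Real.exp_add, ← Real.exp_add, ← Real.exp_nat_mul, ← Real.exp_nat_mul,
    ← Real.exp_neg, ← Real.exp_add, ← Real.exp_sub, ← Real.exp_sub]
  simp only [key]
  simp only [ofReal_exp, ← Complex.exp_add]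
  congr 1
  push_cast
  have hc' : c = (m₁ + m₂ + 1) / 2 := by linear_combination hc / 2
  have hs' : s = (1 - 2 * c - u - v - m₂) / 2 := by linear_combination hs / 2
  rw [hs', hc']
  ring

theorem stmt5 (m₁ m₂ : ℕ) (hm₁ : 1 ≤ m₁) (l : ℂ) (hl : 0 < l.im) (ξ : ℝ) :
    IntegrableOn
      (fun t : ℝ => bfun m₁ m₂ l t * sph m₁ m₂ (ξ : ℂ) t * (Del m₁ m₂ t : ℂ))
      (Set.Ioi 0) ∧
    (∫ t in Set.Ioi (0 : ℝ), bfun m₁ m₂ l t * sph m₁ m₂ (ξ : ℂ) t * (Del m₁ m₂ t : ℂ)) =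
      1 / ((ξ : ℂ) ^ 2 - l ^ 2) := by
  have hρ : 0 < rho m₁ m₂ := by
    have : (1 : ℝ) ≤ m₁ := by exact_mod_cast hm₁
    unfold rho; positivity
  have hρ' : (rho m₁ m₂ : ℂ) = ((m₁ : ℂ) + 2 * m₂) / 2 := by simp [rho]
  obtain ⟨s, hs⟩ : ∃ s : ℂ, s = I * (ξ - l) / 2 := ⟨_, rfl⟩
  obtain ⟨t, ht⟩ : ∃ t : ℂ, t = -I * (ξ + l) / 2 := ⟨_, rfl⟩
  obtain ⟨a, ha⟩ : ∃ a : ℂ, a = ((m₁ : ℂ) + 2) / 4 + I * ξ / 2 := ⟨_, rfl⟩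
  obtain ⟨b, hb⟩ : ∃ b : ℂ, b = ((rho m₁ m₂ : ℂ) + I * ξ) / 2 := ⟨_, rfl⟩
  obtain ⟨c, hc⟩ : ∃ c : ℂ, c = ((m₁ : ℂ) + m₂ + 1) / 2 := ⟨_, rfl⟩
  have hs0 : 0 < s.re := by rw [hs]; simpa using hl
  have ht0 : 0 < t.re := by rw [ht]; simpa using hl
  have ha0 : 0 < a.re := by
    rw [ha, show ((m₁ : ℂ) + 2) / 4 + I * ξ / 2 = (((m₁ + 2) / 4 : ℝ) : ℂ) + (ξ / 2 : ℝ) * I by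
      push_cast; ring, add_re, re_ofReal_mul, I_re, mul_zero,
      add_zero, ofReal_re]
    positivity
  have hb0 : 0 < b.re := by
    rw [hb, show ((rho m₁ m₂ : ℂ) + I * ξ) / 2 = ((rho m₁ m₂ / 2 : ℝ) : ℂ) + (ξ / 2 : ℝ) * I by
      push_cast; ring, add_re, re_ofReal_mul, I_re, mul_zero,
      add_zero, ofReal_re]
    positivity
  have hc0 : 0 < c.re := by
    rw [hc, show ((m₁ : ℂ) + m₂ + 1) / 2 = (((m₁ + m₂ + 1) / 2 : ℝ) : ℂ) by push_cast; ring,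
      ofReal_re]
    positivity
  have hsa : s + c - a = ((rho m₁ m₂ : ℂ) - I * l) / 2 := by rw [hs, hc, ha, hρ']; ring
  have hsb : s + c - b = ((m₁ : ℂ) + 2) / 4 - I * l / 2 := by rw [hs, hc, hb, hρ']; ring
  have hst : 1 + s + t = 1 - I * l := by rw [hs, ht]; ring
  have hab : a + b + t = s + c := by rw [hs, hc, hb, ha, ht, hρ']; ring
  have hsa0 : 0 < (s + c - a).re := by
    rw [← hab, show a + b + t - a = b + t by ring]; simpa using add_pos hb0 ht0
  have hsb0 : 0 < (s + c - b).re := by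
    rw [← hab, show a + b + t - b = a + t by ring]; simpa using add_pos ha0 ht0
  have hst0 : 0 < (1 + s + t).re := by simp only [add_re, one_re]; linarith
  obtain ⟨hI, hJ⟩ :=
    integrableOn_and_integral_hyp_mul_hyp ha0 hb0 hc0 hs0 ht0 hab hsa0 hsb0
  obtain ⟨K, hK⟩ : ∃ K : ℂ, K = Gamma (s + c - a) * Gamma (s + c - b) /
    (Gamma c * Gamma (1 + s + t)) := ⟨_, rfl⟩
  set H : ℝ → ℂ := fun x => hyp (s + c - a) (s + c - b) (1 + s + t) x *
      ((x : ℂ) ^ (s - 1) * (1 - (x : ℂ)) ^ (c - 1) * hyp a b c (1 - x)) with hH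
  have hpt : ∀ x ∈ Ioi (0 : ℝ), K / 4 * (|-(2 * Real.sinh x / Real.cosh x ^ 3)| •
      H (Real.cosh x ^ 2)⁻¹) = bfun m₁ m₂ l x * sph m₁ m₂ (ξ : ℂ) x * (Del m₁ m₂ x : ℂ) := by
    intro x hx
    have hC := Real.cosh_pos x
    have hS : 0 < Real.sinh x := Real.sinh_pos_iff.2 hx
    have h1 : 1 - (((Real.cosh x ^ 2)⁻¹ : ℝ) : ℂ) =
        ((Real.sinh x ^ 2 / Real.cosh x ^ 2 : ℝ) : ℂ) := by
      rw [← ofReal_one, ← ofReal_sub, Real.sinh_sq]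
      congr 1
      field_simp
    have h2 := cpow_mul_cpow_mul_pow_mul_pow hC hS m₁ m₂ (I * l - (rho m₁ m₂ : ℂ))
      (-((rho m₁ m₂ : ℂ) + I * ξ)) s c (by rw [hc]; ring) (by rw [hs, hc, hρ']; ring)
    have h3 : (2 : ℂ) ^ (-(rho m₁ m₂ : ℂ) - 1 - I * l) *
        2 ^ (I * l - (rho m₁ m₂ : ℂ) + m₁ + m₂ + m₂ - 1) = 1 / 4 := by
      rw [← cpow_add _ _ two_ne_zero, show (-(rho m₁ m₂ : ℂ) - 1 - I * l) +
        (I * l - (rho m₁ m₂ : ℂ) + m₁ + m₂ + m₂ - 1) = -(2 : ℕ) by rw [hρ']; push_cast; ring,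
        cpow_neg, cpow_natCast]
      norm_num
    rw [abs_neg, abs_of_pos (by positivity), real_smul]
    simp only [hH, h1]
    simp only [bfun, Phi, sph, Del]
    rw [← hsa, ← hsb, ← hst, ← ha, ← hb, ← hc, ← hK, Real.tanh_eq_sinh_div_cosh, div_pow,
      ← ofReal_inv]
    linear_combination (-(K * hyp (s + c - a) (s + c - b) (1 + s + t)
      (((Real.cosh x ^ 2)⁻¹ : ℝ) : ℂ) * hyp a b c ((Real.sinh x ^ 2 / Real.cosh x ^ 2 : ℝ) : ℂ))) *
      (2 ^ (-(rho m₁ m₂ : ℂ) - 1 - I * l) * h2 + h3 * (((2 * Real.sinh x / Real.cosh x ^ 3 : ℝ) : ℂ) *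
        ((((Real.cosh x ^ 2)⁻¹ : ℝ) : ℂ) ^ (s - 1) *
          ((Real.sinh x ^ 2 / Real.cosh x ^ 2 : ℝ) : ℂ) ^ (c - 1))))
  have hder : ∀ x ∈ Ioi (0 : ℝ), HasDerivWithinAt (fun t : ℝ => (Real.cosh t ^ 2)⁻¹)
    (-(2 * Real.sinh x / Real.cosh x ^ 3)) (Ioi 0) x := fun x _ =>
      (hasDerivAt_inv_cosh_sq x).hasDerivWithinAt
  constructor
  · rw [← image_inv_cosh_sq, integrableOn_image_iff_integrableOn_abs_deriv_smul measurableSet_Ioi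
      hder injOn_inv_cosh_sq] at hI
    exact IntegrableOn.congr_fun (hI.const_mul (K / 4)) hpt measurableSet_Ioi
  · rw [← setIntegral_congr_fun measurableSet_Ioi hpt, integral_const_mul,
      ← integral_image_eq_integral_abs_deriv_smul measurableSet_Ioi hder injOn_inv_cosh_sq,
      image_inv_cosh_sq, hJ, hK]
    have hn0 : ∀ {z : ℂ}, 0 < z.re → z ≠ 0 := by rintro z hz rfl; simp at hz
    have := Gamma_ne_zero_of_re_pos hsa0
    have := Gamma_ne_zero_of_re_pos hsb0
    have := Gamma_ne_zero_of_re_pos hst0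
    have := Gamma_ne_zero_of_re_pos hc0
    have := hn0 hs0
    have := hn0 ht0
    rw [show (ξ : ℂ) ^ 2 - l ^ 2 = 4 * s * t by
      rw [hs, ht]; linear_combination ((ξ : ℂ) ^ 2 - l ^ 2) * I_sq]
    field_simp

end
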